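/- Let n ∈ ℕ, A an n×n real matrix, v ∈ ℝⁿ, and d_k the determinants of the path-extended matrices M_k. Let D ≥ 3 be an integer and assume det A > 0 and d_{D−2} = 0. Then for every k with 0 ≤ k ≤ D−2 one has d_k = ((D−2−k)/(D−2))·det A; in particular d_k > 0 for all 0 ≤ k ≤ D−3. -/

import Mathlib

/-- The path-extended matrix `M_k`: the top-left `n × n` block is `A`; the first
appended index is coupled to the original indices by `v`; appended diagonal entries
are `2`; consecutive appended indices are coupled by `-1`; all other new entries
vanish.  For `k = 0` this is just `A` (reindexed along `Fin (n + 0)`). -/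
def pathExt (n : ℕ) (A : Matrix (Fin n) (Fin n) ℝ) (v : Fin n → ℝ) (k : ℕ) :
    Matrix (Fin (n + k)) (Fin (n + k)) ℝ :=
  Matrix.of fun i j =>
    if hi : (i : ℕ) < n then
      if hj : (j : ℕ) < n then A ⟨i, hi⟩ ⟨j, hj⟩
      else if (j : ℕ) = n then v ⟨i, hi⟩ else 0
    else
      if hj : (j : ℕ) < n then
        if (i : ℕ) = n then v ⟨j, hj⟩ else 0
      else
        if (i : ℕ) = (j : ℕ) then 2
        else if (i : ℕ) + 1 = (j : ℕ) ∨ (j : ℕ) + 1 = (i : ℕ) then -1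
        else 0

/-- The determinants `d_k = det M_k` of the path-extended matrices. -/
def pathDet (n : ℕ) (A : Matrix (Fin n) (Fin n) ℝ) (v : Fin n → ℝ) (k : ℕ) : ℝ :=
  (pathExt n A v k).det

/-! Expanding along the last row and then the last column, `d (k + 2) = 2 * d (k + 1) - d k`: the
second difference of `d` vanishes, so `d` is an arithmetic progression, and such a progression is
determined by its initial value `det A` and its zero at `D - 2`. -/

section Determinant

variable {R : Type*} [CommRing R] {m : ℕ}

theorem det_eq_last_mul_det_of_last_col_eq_zero (M : Matrix (Fin (m + 1)) (Fin (m + 1)) R)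
    (hcol : ∀ i : Fin m, M i.castSucc (Fin.last m) = 0) :
    M.det = M (Fin.last m) (Fin.last m) * (M.submatrix Fin.castSucc Fin.castSucc).det := by
  have hsign : (-1 : R) ^ (m + m) = 1 := Even.neg_one_pow ⟨m, rfl⟩
  simp [Matrix.det_succ_column M (Fin.last m), Fin.sum_univ_castSucc, hcol, hsign]

theorem det_eq_mul_sub_mul_of_tridiagonal_last (M : Matrix (Fin (m + 2)) (Fin (m + 2)) R)
    (hrow : ∀ j : Fin m, M (Fin.last (m + 1)) j.castSucc.castSucc = 0)
    (hcol : ∀ i : Fin m, M i.castSucc.castSucc (Fin.last (m + 1)) = 0) :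
    M.det =
      M (Fin.last (m + 1)) (Fin.last (m + 1)) * (M.submatrix Fin.castSucc Fin.castSucc).det -
        M (Fin.last (m + 1)) (Fin.last m).castSucc * M (Fin.last m).castSucc (Fin.last (m + 1)) *
          ((M.submatrix Fin.castSucc Fin.castSucc).submatrix Fin.castSucc Fin.castSucc).det := by
  have hlast : (Fin.last m).castSucc.succAbove (Fin.last m) = Fin.last (m + 1) := by simp
  have hinit (j : Fin m) : (Fin.last m).castSucc.succAbove j.castSucc = j.castSucc.castSucc := by
    simp [Fin.succAbove_of_castSucc_lt, Fin.lt_def]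
  have hminor : (M.submatrix Fin.castSucc (Fin.last m).castSucc.succAbove).det =
      M (Fin.last m).castSucc (Fin.last (m + 1)) *
        ((M.submatrix Fin.castSucc Fin.castSucc).submatrix Fin.castSucc Fin.castSucc).det := by
    have hminor_col (i : Fin m) :
        M.submatrix Fin.castSucc (Fin.last m).castSucc.succAbove i.castSucc (Fin.last m) = 0 := by
      rw [Matrix.submatrix_apply, hlast, hcol]
    rw [det_eq_last_mul_det_of_last_col_eq_zero _ hminor_col]
    simp only [Matrix.submatrix_apply, Matrix.submatrix_submatrix, Function.comp_def, hlast, hinit]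
  have hsign_diag : (-1 : R) ^ (m + 1 + (m + 1)) = 1 := Even.neg_one_pow ⟨m + 1, rfl⟩
  have hsign_off : (-1 : R) ^ (m + 1 + m) = -1 := Odd.neg_one_pow ⟨m, by ring⟩
  rw [Matrix.det_succ_row M (Fin.last (m + 1)), Fin.sum_univ_castSucc, Fin.sum_univ_castSucc]
  simp only [hrow, Fin.val_last, Fin.val_castSucc, Fin.succAbove_last, hminor, hsign_diag,
    hsign_off, mul_zero, zero_mul, Finset.sum_const_zero]
  ring

end Determinant

theorem eq_add_mul_sub_of_second_difference_eq_zero {R : Type*} [CommRing R] {f : ℕ → R}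
    (hf : ∀ k, f (k + 2) = 2 * f (k + 1) - f k) (k : ℕ) : f k = f 0 + k * (f 1 - f 0) := by
  induction k using Nat.twoStepInduction with
  | zero => simp
  | one => simp
  | more k ih ih' =>
    rw [hf, ih, ih']
    push_cast
    ring

theorem eq_div_mul_of_second_difference_eq_zero {K : Type*} [Field K] {f : ℕ → K}
    (hf : ∀ k, f (k + 2) = 2 * f (k + 1) - f k) {m : ℕ} (hm : (m : K) ≠ 0) (hfm : f m = 0)
    (k : ℕ) : f k = ((m : K) - k) / m * f 0 := by
  have hzero : f 0 + m * (f 1 - f 0) = 0 :=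
    (eq_add_mul_sub_of_second_difference_eq_zero hf m).symm.trans hfm
  rw [eq_add_mul_sub_of_second_difference_eq_zero hf k]
  field_simp
  linear_combination (k : K) * hzero

section PathExtension

variable (n : ℕ) (A : Matrix (Fin n) (Fin n) ℝ) (v : Fin n → ℝ)

theorem pathExt_zero : pathExt n A v 0 = A := by
  ext i j
  simp [pathExt]

theorem pathExt_submatrix_castSucc (k : ℕ) :
    (pathExt n A v (k + 1)).submatrix Fin.castSucc Fin.castSucc = pathExt n A v k :=
  rfl

theorem pathDet_zero : pathDet n A v 0 = A.det := by
  rw [pathDet, pathExt_zero]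

theorem pathDet_add_two (k : ℕ) :
    pathDet n A v (k + 2) = 2 * pathDet n A v (k + 1) - pathDet n A v k := by
  have hrow (j : Fin (n + k)) :
      pathExt n A v (k + 2) (Fin.last (n + k + 1)) j.castSucc.castSucc = 0 := by
    simp only [pathExt, Matrix.of_apply, Fin.val_last, Fin.val_castSucc]
    grind
  have hcol (i : Fin (n + k)) :
      pathExt n A v (k + 2) i.castSucc.castSucc (Fin.last (n + k + 1)) = 0 := by
    simp only [pathExt, Matrix.of_apply, Fin.val_last, Fin.val_castSucc]
    grind
  have hdiag : pathExt n A v (k + 2) (Fin.last (n + k + 1)) (Fin.last (n + k + 1)) = 2 := by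
    simp [pathExt, add_assoc]
  have hlower : pathExt n A v (k + 2) (Fin.last (n + k + 1)) (Fin.last (n + k)).castSucc = -1 := by
    simp [pathExt, add_assoc]
  have hupper : pathExt n A v (k + 2) (Fin.last (n + k)).castSucc (Fin.last (n + k + 1)) = -1 := by
    simp [pathExt, add_assoc]
  have hdet := det_eq_mul_sub_mul_of_tridiagonal_last (m := n + k) (pathExt n A v (k + 2)) hrow hcol
  rw [hdiag, hlower, hupper, pathExt_submatrix_castSucc n A v (k + 1),
    pathExt_submatrix_castSucc n A v k] at hdet
  simpa only [pathDet, neg_mul_neg, one_mul] using hdet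

variable {n A v} in
theorem pathDet_eq_of_pathDet_eq_zero {m : ℕ} (hm : m ≠ 0) (h0 : pathDet n A v m = 0) (k : ℕ) :
    pathDet n A v k = ((m : ℝ) - k) / m * A.det := by
  rw [← pathDet_zero n A v]
  exact eq_div_mul_of_second_difference_eq_zero (pathDet_add_two n A v) (Nat.cast_ne_zero.mpr hm)
    h0 k

end PathExtension

/-- if `det A > 0` and `d_{D-2} = 0` for some integer `D ≥ 3`, then
`d_k = ((D-2-k)/(D-2)) · det A` for all `0 ≤ k ≤ D-2`; in particular `d_k > 0`
for all `0 ≤ k ≤ D-3`. -/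
theorem pathDet_pos_chain (n : ℕ) (A : Matrix (Fin n) (Fin n) ℝ) (v : Fin n → ℝ)
    (D : ℕ) (hD : 3 ≤ D) (hA : 0 < A.det) (h0 : pathDet n A v (D - 2) = 0) :
    (∀ k : ℕ, k ≤ D - 2 →
        pathDet n A v k = (((D : ℝ) - 2 - (k : ℝ)) / ((D : ℝ) - 2)) * A.det) ∧
      (∀ k : ℕ, k ≤ D - 3 → 0 < pathDet n A v k) := by
  have hcast : ((D - 2 : ℕ) : ℝ) = (D : ℝ) - 2 := by
    rw [Nat.cast_sub (by lia), Nat.cast_ofNat]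
  have hformula (k : ℕ) :
      pathDet n A v k = (((D : ℝ) - 2 - (k : ℝ)) / ((D : ℝ) - 2)) * A.det := by
    rw [← hcast]
    exact pathDet_eq_of_pathDet_eq_zero (by lia) h0 k
  refine ⟨fun k _ => hformula k, fun k hk => ?_⟩
  have hlt : (k : ℝ) < (D : ℝ) - 2 := by
    rw [← hcast]
    exact_mod_cast (by lia : k < D - 2)
  have hpos : (0 : ℝ) < (D : ℝ) - 2 := (Nat.cast_nonneg k).trans_lt hlt
  rw [hformula]
  exact mul_pos (div_pos (sub_pos.mpr hlt) hpos) hA
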